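/- arXiv:2404.15407 — 2 statements merged into one kernel-verified Lean document; each statement's English description precedes it below -/
import Mathlib

section
/- Suppose U is a unitary on (ℂ²)^{⊗(n+2)} ⊗ (ℂ²)^{⊗α} such that (Π_k^± ⊗ ⟨0^α|) U (Π_k^± ⊗ |0^α⟩) = Π_k^± P^{up} Π_k^±. Then V := ((I^{⊗n} ⊗ (HZ) ⊗ I) ⊗ I^{⊗α}) U satisfies (Π_k ⊗ ⟨0^α|) V (Π_k ⊗ |0^α⟩) = Δ_k^{up} / (√2 · K^{up}). -/
open BigOperators Matrix Kronecker

attribute [local instance] Classical.propDecidable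

noncomputable section

namespace QWSC

/-- A finite abstract simplicial complex on the vertex set `Fin n`:
a family of vertex sets closed under taking subsets. -/
def IsComplex (n : ℕ) (X : Finset (Finset (Fin n))) : Prop :=
  ∀ s ∈ X, ∀ t ⊆ s, t ∈ X

/-- The weighted boundary operator `∂_k : C_k → C_{k-1}` written as a matrix in the
orthonormal chain bases (rows are indexed by `(k-1)`-simplices, columns by `k`-simplices;
a `k`-simplex has `k+1` vertices).  On the orthonormal basis vector of
`σ = {v_0 < … < v_k}` it has entries `(-1)^j w(v_j)` at the face `σ \ {v_j}`. -/
def boundary (n : ℕ) (X : Finset (Finset (Fin n))) (w : Fin n → ℝ) (k : ℕ) :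
    Matrix (Finset (Fin n)) (Finset (Fin n)) ℝ :=
  Matrix.of fun τ σ =>
    if σ ∈ X ∧ σ.card = k + 1 ∧ τ ⊆ σ ∧ τ.card = k then
      ∑ v ∈ σ \ τ, (-1 : ℝ) ^ ((σ.filter fun u => u < v).card) * w v
    else 0

/-- The weighted up Laplacian `Δ_k^{up} = ∂_{k+1} ∂_{k+1}^*`. -/
def upLap (n : ℕ) (X : Finset (Finset (Fin n))) (w : Fin n → ℝ) (k : ℕ) :
    Matrix (Finset (Fin n)) (Finset (Fin n)) ℝ :=
  boundary n X w (k + 1) * (boundary n X w (k + 1))ᵀ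

/-- The weighted down Laplacian `Δ_k^{down} = ∂_k^* ∂_k`. -/
def downLap (n : ℕ) (X : Finset (Finset (Fin n))) (w : Fin n → ℝ) (k : ℕ) :
    Matrix (Finset (Fin n)) (Finset (Fin n)) ℝ :=
  (boundary n X w k)ᵀ * boundary n X w k

/-- The weighted combinatorial Laplacian `Δ_k = Δ_k^{up} + Δ_k^{down}`. -/
def fullLap (n : ℕ) (X : Finset (Finset (Fin n))) (w : Fin n → ℝ) (k : ℕ) :
    Matrix (Finset (Fin n)) (Finset (Fin n)) ℝ :=
  upLap n X w k + downLap n X w k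

/-- `true` iff removing the vertex `v` from `σ` reverses the induced orientation,
i.e. the position of `v` in the increasing ordering of `σ` is odd. -/
def faceFlip (n : ℕ) (σ : Finset (Fin n)) (v : Fin n) : Bool :=
  decide ((σ.filter fun u => u < v).card % 2 = 1)

/-- An oriented simplex: a vertex set together with an orientation bit
(`false` = positively oriented, `true` = negatively oriented). -/
abbrev OSimp (n : ℕ) := Finset (Fin n) × Bool

/-- Up-adjacency `σ ∼↑ σ'` of oriented simplices: the vertex sets are distinct, their
union is a common coface belonging to `X`, and the orientations induced on the common
coface by `σ` and by `σ'` agree. -/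
def UpAdj (n : ℕ) (X : Finset (Finset (Fin n))) (σ σ' : OSimp n) : Prop :=
  σ.1 ≠ σ'.1 ∧ σ.1 ∪ σ'.1 ∈ X ∧ (σ.1 ∪ σ'.1).card = σ.1.card + 1 ∧
    σ'.1.card = σ.1.card ∧
    ∀ v ∈ σ'.1 \ σ.1, ∀ v' ∈ σ.1 \ σ'.1,
      xor σ.2 (faceFlip n (σ.1 ∪ σ'.1) v) = xor σ'.2 (faceFlip n (σ.1 ∪ σ'.1) v')

/-- Down-adjacency `σ ∼↓ σ'` of oriented simplices: the vertex sets are distinct, they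
share a common face (their intersection, of cardinality one less), and the orientations
induced on the common face by `σ` and by `σ'` agree. -/
def DownAdj (n : ℕ) (σ σ' : OSimp n) : Prop :=
  σ.1 ≠ σ'.1 ∧ (σ.1 ∩ σ'.1).card + 1 = σ.1.card ∧ σ'.1.card = σ.1.card ∧
    ∀ v ∈ σ.1 \ σ'.1, ∀ v' ∈ σ'.1 \ σ.1,
      xor σ.2 (faceFlip n σ.1 v) = xor σ'.2 (faceFlip n σ'.1 v')

/-- `up(σ)`: the vertices `u ∉ σ` with `σ ∪ {u} ∈ X`. -/
def upSet (n : ℕ) (X : Finset (Finset (Fin n))) (σ : Finset (Fin n)) : Finset (Fin n) :=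
  Finset.univ.filter fun u => u ∉ σ ∧ insert u σ ∈ X

/-- The set of `k`-simplices of `X` (those with `k+1` vertices). -/
def simplices (n : ℕ) (X : Finset (Finset (Fin n))) (k : ℕ) : Finset (Finset (Fin n)) :=
  X.filter fun s => s.card = k + 1

/-- Normalization constant `K^{up} = max_{σ∈X_k} Σ_{u∈V∖σ} Σ_{v∈σ∪{u}} w(u)w(v)`. -/
def Kup (n : ℕ) (X : Finset (Finset (Fin n))) (w : Fin n → ℝ) (k : ℕ) : ℝ :=
  sSup {x : ℝ | ∃ σ ∈ X, σ.card = k + 1 ∧ x = ∑ u ∈ σᶜ, ∑ v ∈ insert u σ, w u * w v}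

/-- Normalization constant `K^{down} = max_{σ∈X_k} Σ_{u∈σ} Σ_{v∈V∖(σ∖{u})} w(u)w(v)`. -/
def Kdown (n : ℕ) (X : Finset (Finset (Fin n))) (w : Fin n → ℝ) (k : ℕ) : ℝ :=
  sSup {x : ℝ | ∃ σ ∈ X, σ.card = k + 1 ∧ x = ∑ u ∈ σ, ∑ v ∈ (σ.erase u)ᶜ, w u * w v}

/-- Normalization constant `K = max_{σ∈X_k} (Σ_{v∈V} w(v)² + Σ_{u∈V∖σ} Σ_{v∈σ} w(u)w(v))`. -/
def Kfull (n : ℕ) (X : Finset (Finset (Fin n))) (w : Fin n → ℝ) (k : ℕ) : ℝ :=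
  sSup {x : ℝ | ∃ σ ∈ X, σ.card = k + 1 ∧
    x = (∑ v : Fin n, w v ^ 2) + ∑ u ∈ σᶜ, ∑ v ∈ σ, w u * w v}

/-- The `k`-th chain space `C_k`: the span of the basis vectors indexed by
`k`-simplices of `X`, inside the coordinate space of the orthonormal chain basis. -/
def chainSpace (n : ℕ) (X : Finset (Finset (Fin n))) (k : ℕ) :
    Submodule ℝ (Finset (Fin n) → ℝ) :=
  Submodule.span ℝ ((fun σ => Pi.single σ (1 : ℝ)) '' {σ | σ ∈ X ∧ σ.card = k + 1})

/-- The state space `S_k = X_k^± ∪ {Θ}` of the walks; `none` is the absorbing state `Θ`. -/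
abbrev SState (n : ℕ) := Option (OSimp n)

/-- A state is a member of `S_k`: either the absorbing state, or an oriented
`k`-simplex of `X`. -/
def valid (n : ℕ) (X : Finset (Finset (Fin n))) (k : ℕ) : SState n → Prop
  | none => True
  | some σ => σ.1 ∈ X ∧ σ.1.card = k + 1

/-- `η^{up}_σ = 1 − (1/K^{up}) Σ_{τ∈X_k^+} |(Δ_k^{up})_{τ,σ_+}|`. -/
def etaUp (n : ℕ) (X : Finset (Finset (Fin n))) (w : Fin n → ℝ) (k : ℕ) (σ : OSimp n) : ℝ :=
  1 - (∑ τ ∈ simplices n X k, |upLap n X w k τ σ.1|) / Kup n X w k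

/-- `η^{down}_σ = 1 − (1/K^{down}) Σ_{τ∈X_k^+} |(Δ_k^{down})_{τ,σ_+}|`. -/
def etaDown (n : ℕ) (X : Finset (Finset (Fin n))) (w : Fin n → ℝ) (k : ℕ) (σ : OSimp n) : ℝ :=
  1 - (∑ τ ∈ simplices n X k, |downLap n X w k τ σ.1|) / Kdown n X w k

/-- `η_σ = 1 − (1/K) Σ_{τ∈X_k^+} |(Δ_k)_{τ,σ_+}|`. -/
def etaFull (n : ℕ) (X : Finset (Finset (Fin n))) (w : Fin n → ℝ) (k : ℕ) (σ : OSimp n) : ℝ :=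
  1 - (∑ τ ∈ simplices n X k, |fullLap n X w k τ σ.1|) / Kfull n X w k

/-- The up-walk transition matrix `P^{up}` on `S_k`. -/
def Pup (n : ℕ) (X : Finset (Finset (Fin n))) (w : Fin n → ℝ) (k : ℕ) :
    SState n → SState n → ℝ
  | some σ, some σ' =>
      if σ.1 ∈ X ∧ σ.1.card = k + 1 ∧ σ'.1 ∈ X ∧ σ'.1.card = k + 1 then
        if σ = σ' then (∑ u ∈ upSet n X σ.1, w u ^ 2) / Kup n X w k
        else if UpAdj n X σ σ' then
          ((∑ v ∈ σ.1 \ σ'.1, w v) * (∑ v ∈ σ'.1 \ σ.1, w v)) / Kup n X w k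
        else 0
      else 0
  | some σ, none => if σ.1 ∈ X ∧ σ.1.card = k + 1 then etaUp n X w k σ else 0
  | none, none => 1
  | none, some _ => 0

/-- The down-walk transition matrix `P^{down}` on `S_k`. -/
def Pdown (n : ℕ) (X : Finset (Finset (Fin n))) (w : Fin n → ℝ) (k : ℕ) :
    SState n → SState n → ℝ
  | some σ, some σ' =>
      if σ.1 ∈ X ∧ σ.1.card = k + 1 ∧ σ'.1 ∈ X ∧ σ'.1.card = k + 1 then
        if σ = σ' then (∑ v ∈ σ.1, w v ^ 2) / Kdown n X w k
        else if DownAdj n σ σ' then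
          ((∑ v ∈ σ.1 \ σ'.1, w v) * (∑ v ∈ σ'.1 \ σ.1, w v)) / Kdown n X w k
        else 0
      else 0
  | some σ, none => if σ.1 ∈ X ∧ σ.1.card = k + 1 then etaDown n X w k σ else 0
  | none, none => 1
  | none, some _ => 0

/-- The harmonic-walk transition matrix `P` on `S_k`. -/
def Pharm (n : ℕ) (X : Finset (Finset (Fin n))) (w : Fin n → ℝ) (k : ℕ) :
    SState n → SState n → ℝ
  | some σ, some σ' =>
      if σ.1 ∈ X ∧ σ.1.card = k + 1 ∧ σ'.1 ∈ X ∧ σ'.1.card = k + 1 then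
        if σ = σ' then
          ((∑ u ∈ upSet n X σ.1, w u ^ 2) + ∑ v ∈ σ.1, w v ^ 2) / Kfull n X w k
        else if DownAdj n σ σ' ∧ ¬ UpAdj n X σ (σ'.1, !σ'.2) then
          ((∑ v ∈ σ.1 \ σ'.1, w v) * (∑ v ∈ σ'.1 \ σ.1, w v)) / Kfull n X w k
        else 0
      else 0
  | some σ, none => if σ.1 ∈ X ∧ σ.1.card = k + 1 then etaFull n X w k σ else 0
  | none, none => 1
  | none, some _ => 0

/-! ### Quantum encodings -/

/-- The computational basis of `(ℂ²)^{⊗(n+2)}`: `n` membership qubits, one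
orientation qubit, and one qubit flagging the absorbing state. -/
abbrev QIdx (n : ℕ) := (Fin n → Bool) × Bool × Bool

/-- The encoding of states of `S_k` as computational basis states:
`|σ⟩ = |x_σ⟩|s(σ)⟩|0⟩` and `|Θ⟩ = |0^n⟩|0⟩|1⟩`. -/
def encode (n : ℕ) : SState n → QIdx n
  | none => (fun _ => false, false, true)
  | some σ => (fun i => decide (i ∈ σ.1), σ.2, false)

/-- The all-zeros basis state `|0^{n+2}⟩`. -/
def zeroQ (n : ℕ) : QIdx n := (fun _ => false, false, false)

/-- The projector `Π_k^±` onto the span of the encoded oriented `k`-simplices of `X`. -/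
def PiPM (n : ℕ) (X : Finset (Finset (Fin n))) (k : ℕ) : Matrix (QIdx n) (QIdx n) ℂ :=
  Matrix.of fun p q =>
    if p = q ∧ ∃ σ : OSimp n, σ.1 ∈ X ∧ σ.1.card = k + 1 ∧ p = encode n (some σ) then 1 else 0

/-- The projector `Π_k` onto the span of the encoded positively oriented
`k`-simplices of `X`. -/
def PiK (n : ℕ) (X : Finset (Finset (Fin n))) (k : ℕ) : Matrix (QIdx n) (QIdx n) ℂ :=
  Matrix.of fun p q =>
    if p = q ∧ ∃ s ∈ X, s.card = k + 1 ∧ p = encode n (some (s, false)) then 1 else 0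

/-- Decode a basis state into the state of `S_k` it represents (if any). -/
def decodeQ (n : ℕ) : QIdx n → Option (SState n) := fun q =>
  if q.2.2 = false then some (some ((Finset.univ.filter fun i => q.1 i = true), q.2.1))
  else if q = encode n none then some none else none

/-- Identify a transition kernel `P` on `S_k` with the operator on `(ℂ²)^{⊗(n+2)}`
having `⟨σ'|P|σ⟩ = P_{σ,σ'}` for `σ, σ' ∈ S_k`, vanishing off the span of `S_k`. -/
def toQMat (n : ℕ) (P : SState n → SState n → ℝ) : Matrix (QIdx n) (QIdx n) ℂ :=
  Matrix.of fun q' q =>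
    match decodeQ n q, decodeQ n q' with
    | some σ, some σ' => (P σ σ' : ℂ)
    | _, _ => 0

/-- Identify a matrix indexed by vertex sets (acting on the chain space in the
orthonormal basis of positively oriented simplices) with an operator on
`(ℂ²)^{⊗(n+2)}` supported on the encoded positively oriented simplices. -/
def lapQ (n : ℕ) (L : Matrix (Finset (Fin n)) (Finset (Fin n)) ℝ) :
    Matrix (QIdx n) (QIdx n) ℂ :=
  Matrix.of fun q' q =>
    if q'.2.1 = false ∧ q'.2.2 = false ∧ q.2.1 = false ∧ q.2.2 = false then
      (L (Finset.univ.filter fun i => q'.1 i = true)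
         (Finset.univ.filter fun i => q.1 i = true) : ℂ)
    else 0

/-- The SWAP unitary exchanging the two `(n+2)`-qubit registers. -/
def swapMat (n : ℕ) : Matrix (QIdx n × QIdx n) (QIdx n × QIdx n) ℂ :=
  Matrix.of fun p q => if p.1 = q.2 ∧ p.2 = q.1 then 1 else 0

/-- The compression `(· ⊗ ⟨0^{n+2}|) W (· ⊗ |0^{n+2}⟩)` of an operator on two
`(n+2)`-qubit registers to the first register. -/
def compress (n : ℕ) (W : Matrix (QIdx n × QIdx n) (QIdx n × QIdx n) ℂ) :
    Matrix (QIdx n) (QIdx n) ℂ :=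
  Matrix.of fun q' q => W (q', zeroQ n) (q, zeroQ n)

/-- The compression `(· ⊗ ⟨0^α|) W (· ⊗ |0^α⟩)` of an operator on the system
register together with an `α`-qubit ancilla register. -/
def compressA (n α : ℕ) (W : Matrix (QIdx n × (Fin α → Bool)) (QIdx n × (Fin α → Bool)) ℂ) :
    Matrix (QIdx n) (QIdx n) ℂ :=
  Matrix.of fun q' q => W (q', fun _ => false) (q, fun _ => false)

/-- The gate `I^{⊗n} ⊗ (HZ) ⊗ I` acting on the orientation qubit, where `H` is the
Hadamard gate and `Z` the Pauli-Z gate. -/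
def hzGate (n : ℕ) : Matrix (QIdx n) (QIdx n) ℂ :=
  Matrix.of fun p q =>
    if p.1 = q.1 ∧ p.2.2 = q.2.2 then
      (if p.2.1 = false ∧ q.2.1 = true then -((Real.sqrt 2 : ℂ))⁻¹ else ((Real.sqrt 2 : ℂ))⁻¹)
    else 0

/-!
On the orientation qubit `⟨0| HZ = (⟨0| - ⟨1|) / √2`.  Since the gate fixes the vertex set and the
flag, it commutes with `Π_k^±`, so sandwiching `V` by `Π_k` only sees the block of `U` that encodes
the up-walk, and its matrix element at positively oriented `s`, `t` is `1 / √2` times the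
probability of stepping from `t` to `s` minus that of stepping from `t` to `s` with the orientation
reversed.  For `s ≠ t` with a common coface, the sign of `Δ_k^{up}` at `(s, t)` decides which one of
these two steps is allowed, and its probability is `|Δ_k^{up}| / K^{up}` at `(s, t)`, so that the
difference is `Δ_k^{up} / K^{up}`.
-/

section Combinatorics

lemma union_eq_of_subset_of_card_eq {α : Type*} [DecidableEq α] {s t r : Finset α}
    (hst : s ≠ t) (hcard : s.card = t.card) (hs : s ⊆ r) (ht : t ⊆ r) (hr : r.card = s.card + 1) :
    s ∪ t = r := by
  refine Finset.eq_of_subset_of_card_le (Finset.union_subset hs ht) ?_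
  have hts : ¬ t ⊆ s := fun h => hst (Finset.eq_of_subset_of_card_le h hcard.le).symm
  have hlt : s.card < (s ∪ t).card :=
    Finset.card_lt_card (Finset.subset_union_left.ssubset_of_not_subset
      fun h => hts (Finset.subset_union_right.trans h))
  omega

lemma exists_insert_eq_union {α : Type*} [DecidableEq α] {s t : Finset α}
    (hcard : (s ∪ t).card = s.card + 1) : ∃ v ∉ s, insert v s = s ∪ t ∧ t \ s = {v} := by
  obtain ⟨v, hv, hvs⟩ := Finset.exists_eq_insert_iff.2 ⟨Finset.subset_union_left, hcard.symm⟩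
  exact ⟨v, hv, hvs, by rw [← Finset.union_sdiff_left s t, ← hvs, Finset.insert_sdiff_cancel hv]⟩

variable {n k : ℕ} {X : Finset (Finset (Fin n))} {w : Fin n → ℝ} {s t r : Finset (Fin n)}

lemma mem_simplices : s ∈ simplices n X k ↔ s ∈ X ∧ s.card = k + 1 :=
  Finset.mem_filter

lemma mem_upSet {u : Fin n} : u ∈ upSet n X s ↔ u ∉ s ∧ insert u s ∈ X := by
  simp [upSet]

lemma neg_one_pow_toNat_faceFlip (u : Fin n) :
    (-1 : ℝ) ^ (faceFlip n s u).toNat = (-1) ^ (s.filter fun v => v < u).card := by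
  rw [neg_one_pow_eq_pow_mod_two (n := (s.filter fun v => v < u).card), faceFlip]
  rcases Nat.mod_two_eq_zero_or_one (s.filter fun v => v < u).card with h | h <;> simp [h]

lemma of_boundary_ne_zero (h : boundary n X w k s r ≠ 0) :
    r ∈ X ∧ r.card = k + 1 ∧ s ⊆ r ∧ s.card = k := by
  contrapose! h
  exact if_neg fun ⟨hX, hr, hsr, hs⟩ => h hX hr hsr hs

lemma boundary_apply_insert {u : Fin n} (hu : u ∉ s) (hs : s.card = k) (hX : insert u s ∈ X) :
    boundary n X w k s (insert u s) = (-1) ^ (faceFlip n (insert u s) u).toNat * w u := by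
  have hcond : insert u s ∈ X ∧ (insert u s).card = k + 1 ∧ s ⊆ insert u s ∧ s.card = k :=
    ⟨hX, by rw [Finset.card_insert_of_notMem hu, hs], Finset.subset_insert u s, hs⟩
  rw [boundary, Matrix.of_apply, if_pos hcond, Finset.insert_sdiff_cancel hu,
    Finset.sum_singleton, neg_one_pow_toNat_faceFlip]

lemma upLap_apply :
    upLap n X w k s t = ∑ r, boundary n X w (k + 1) s r * boundary n X w (k + 1) t r :=
  Matrix.mul_apply

lemma upLap_comm : upLap n X w k s t = upLap n X w k t s := by
  simp only [upLap_apply, mul_comm]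

lemma mem_simplices_of_upLap_ne_zero (hX : IsComplex n X) (h : upLap n X w k s t ≠ 0) :
    s ∈ simplices n X k ∧ t ∈ simplices n X k := by
  rw [upLap_apply] at h
  obtain ⟨r, -, hr⟩ := Finset.exists_ne_zero_of_sum_ne_zero h
  obtain ⟨hrX, -, hsr, hs⟩ := of_boundary_ne_zero (left_ne_zero_of_mul hr)
  obtain ⟨-, -, htr, ht⟩ := of_boundary_ne_zero (right_ne_zero_of_mul hr)
  exact ⟨mem_simplices.2 ⟨hX r hrX s hsr, hs⟩, mem_simplices.2 ⟨hX r hrX t htr, ht⟩⟩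

lemma upLap_apply_self (hs : s.card = k + 1) :
    upLap n X w k s s = ∑ u ∈ upSet n X s, w u ^ 2 := by
  rw [upLap_apply]
  refine (Finset.sum_of_injOn (fun u => insert u s) ?_ (by simp) ?_ ?_).symm
  · exact (Finset.insert_inj_on s).mono fun u hu => (mem_upSet.1 hu).1
  · intro r _ hr
    contrapose! hr
    obtain ⟨hrX, hrcard, hsr, -⟩ := of_boundary_ne_zero (left_ne_zero_of_mul hr)
    obtain ⟨u, hu, rfl⟩ := Finset.exists_eq_insert_iff.2 ⟨hsr, by omega⟩
    exact ⟨u, mem_upSet.2 ⟨hu, hrX⟩, rfl⟩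
  · intro u hu
    obtain ⟨hus, huX⟩ := mem_upSet.1 hu
    rw [boundary_apply_insert hus hs huX, mul_mul_mul_comm, ← pow_add,
      Even.neg_one_pow ⟨_, rfl⟩, one_mul, sq]

lemma upLap_apply_of_ne (hs : s.card = k + 1) (ht : t.card = k + 1) (hst : s ≠ t) :
    upLap n X w k s t =
      boundary n X w (k + 1) s (s ∪ t) * boundary n X w (k + 1) t (s ∪ t) := by
  rw [upLap_apply]
  refine Fintype.sum_eq_single _ fun r hr => ?_
  contrapose! hr
  obtain ⟨-, hrcard, hsr, -⟩ := of_boundary_ne_zero (left_ne_zero_of_mul hr)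
  obtain ⟨-, -, htr, -⟩ := of_boundary_ne_zero (right_ne_zero_of_mul hr)
  exact (union_eq_of_subset_of_card_eq hst (by omega) hsr htr (by omega)).symm

lemma upLap_apply_eq_indicator_upAdj_sub (hs : s.card = k + 1) (ht : t.card = k + 1)
    (hst : s ≠ t) (b : Bool) :
    upLap n X w k s t =
      ((if UpAdj n X (s, b) (t, b) then 1 else 0) - (if UpAdj n X (s, b) (t, !b) then 1 else 0)) *
        ((∑ v ∈ s \ t, w v) * ∑ v ∈ t \ s, w v) := by
  rw [upLap_apply_of_ne hs ht hst]
  by_cases hcoface : s ∪ t ∈ X ∧ (s ∪ t).card = k + 2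
  · obtain ⟨hX, hcard⟩ := hcoface
    obtain ⟨v, hv, hvs, htds⟩ := exists_insert_eq_union (s := s) (t := t) (by omega)
    obtain ⟨u, hu, hut, hsdt⟩ :=
      exists_insert_eq_union (s := t) (t := s) (by rw [Finset.union_comm]; omega)
    rw [Finset.union_comm] at hut
    have hbs := boundary_apply_insert (w := w) hv hs (hvs ▸ hX)
    have hbt := boundary_apply_insert (w := w) hu ht (hut ▸ hX)
    rw [hvs] at hbs
    rw [hut] at hbt
    have hadj (c : Bool) : UpAdj n X (s, b) (t, c) ↔
        xor b (faceFlip n (s ∪ t) v) = xor c (faceFlip n (s ∪ t) u) := by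
      simp [UpAdj, htds, hsdt, hst, hX, hcard, hs, ht]
    rw [hbs, hbt, htds, hsdt]
    simp only [hadj, Finset.sum_singleton]
    cases b <;> cases faceFlip n (s ∪ t) v <;> cases faceFlip n (s ∪ t) u <;> simp [mul_comm]
  · have hboundary : boundary n X w (k + 1) s (s ∪ t) = 0 := by
      contrapose! hcoface
      obtain ⟨hX, hcard, -⟩ := of_boundary_ne_zero hcoface
      exact ⟨hX, hcard⟩
    have hadj (c : Bool) : ¬ UpAdj n X (s, b) (t, c) := fun ⟨_, hX, hcard, _⟩ =>
      hcoface ⟨hX, hcard.trans (congrArg (· + 1) hs)⟩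
    simp [hboundary, hadj]

lemma Pup_sub_Pup_not_eq_upLap_div (hs : s ∈ simplices n X k) (ht : t ∈ simplices n X k)
    (b : Bool) :
    Pup n X w k (some (s, b)) (some (t, b)) - Pup n X w k (some (s, b)) (some (t, !b)) =
      upLap n X w k s t / Kup n X w k := by
  obtain ⟨hsX, hs⟩ := mem_simplices.1 hs
  obtain ⟨htX, ht⟩ := mem_simplices.1 ht
  rcases eq_or_ne s t with rfl | hst
  · simp [Pup, UpAdj, hsX, hs, upLap_apply_self hs]
  · rw [upLap_apply_eq_indicator_upAdj_sub hs ht hst b]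
    simp only [Pup, hsX, hs, htX, ht, Prod.mk.injEq, hst, false_and, and_self, if_true, if_false]
    split_ifs <;> ring

end Combinatorics

section Encoding

variable {n k : ℕ} {X : Finset (Finset (Fin n))}

/-- The vertex set read off the `n` membership qubits of a computational basis state. -/
def vertexSet (p : QIdx n) : Finset (Fin n) :=
  Finset.univ.filter fun i => p.1 i = true

lemma vertexSet_encode (σ : OSimp n) : vertexSet (encode n (some σ)) = σ.1 := by
  simp [vertexSet, encode]

lemma eq_encode_iff {p : QIdx n} {σ : OSimp n} :
    p = encode n (some σ) ↔ vertexSet p = σ.1 ∧ p.2.1 = σ.2 ∧ p.2.2 = false := by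
  constructor
  · rintro rfl
    exact ⟨vertexSet_encode σ, rfl, rfl⟩
  · rintro ⟨hvert, hor, hflag⟩
    refine Prod.ext (funext fun i => ?_) (Prod.ext hor hflag)
    simp [encode, ← hvert, vertexSet]

lemma PiPM_eq_diagonal :
    PiPM n X k =
      diagonal fun p => if vertexSet p ∈ simplices n X k ∧ p.2.2 = false then 1 else 0 := by
  ext p q
  simp only [PiPM, Matrix.of_apply, diagonal_apply, eq_encode_iff, mem_simplices, Prod.exists]
  by_cases hpq : p = q <;> simp [hpq, and_assoc]

lemma PiK_eq_diagonal :
    PiK n X k = diagonal fun p =>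
      if vertexSet p ∈ simplices n X k ∧ p.2.1 = false ∧ p.2.2 = false then 1 else 0 := by
  ext p q
  simp only [PiK, Matrix.of_apply, diagonal_apply, eq_encode_iff, mem_simplices]
  by_cases hpq : p = q <;> simp [hpq, and_assoc]

lemma PiK_mul_PiPM : PiK n X k * PiPM n X k = PiK n X k := by
  rw [PiK_eq_diagonal, PiPM_eq_diagonal, diagonal_mul_diagonal]
  congr! 2 with p
  split_ifs <;> simp_all

lemma PiPM_mul_PiK : PiPM n X k * PiK n X k = PiK n X k := by
  rw [PiK_eq_diagonal, PiPM_eq_diagonal, diagonal_mul_diagonal]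
  congr! 2 with p
  split_ifs <;> simp_all

lemma hzGate_mul_PiPM : hzGate n * PiPM n X k = PiPM n X k * hzGate n := by
  ext p q
  rw [PiPM_eq_diagonal, mul_diagonal, diagonal_mul]
  by_cases hpq : p.1 = q.1 ∧ p.2.2 = q.2.2
  · simp only [vertexSet, hpq.1, hpq.2]
    exact mul_comm _ _
  · simp [hzGate, hpq]

lemma PiK_mul_mul_PiK_eq_smul_lapQ {M : Matrix (QIdx n) (QIdx n) ℂ}
    {L : Matrix (Finset (Fin n)) (Finset (Fin n)) ℝ} {c : ℂ}
    (hL : ∀ s t, L s t ≠ 0 → s ∈ simplices n X k ∧ t ∈ simplices n X k)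
    (hM : ∀ s ∈ simplices n X k, ∀ t ∈ simplices n X k,
      M (encode n (some (s, false))) (encode n (some (t, false))) = c * L s t) :
    PiK n X k * M * PiK n X k = c • lapQ n L := by
  ext p q
  have hlapQ : lapQ n L p q =
      if p.2.1 = false ∧ p.2.2 = false ∧ q.2.1 = false ∧ q.2.2 = false then
        (L (vertexSet p) (vertexSet q) : ℂ) else 0 := rfl
  rw [PiK_eq_diagonal, mul_diagonal, diagonal_mul, Matrix.smul_apply, hlapQ, smul_eq_mul]
  by_cases hpos : p.2.1 = false ∧ p.2.2 = false ∧ q.2.1 = false ∧ q.2.2 = false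
  · obtain ⟨hpor, hpflag, hqor, hqflag⟩ := hpos
    by_cases hmem : vertexSet p ∈ simplices n X k ∧ vertexSet q ∈ simplices n X k
    · have hMpq := hM _ hmem.1 _ hmem.2
      rw [← eq_encode_iff.2 ⟨rfl, hpor, hpflag⟩, ← eq_encode_iff.2 ⟨rfl, hqor, hqflag⟩] at hMpq
      simp [hmem, hpor, hpflag, hqor, hqflag, hMpq]
    · have hzero : L (vertexSet p) (vertexSet q) = 0 := by
        contrapose! hmem
        exact hL _ _ hmem
      rw [not_and_or] at hmem
      rcases hmem with hp | hq <;> simp [*]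
  · rw [if_neg hpos, mul_zero]
    split_ifs <;> simp_all

lemma decodeQ_encode (σ : SState n) : decodeQ n (encode n σ) = some σ := by
  cases σ <;> simp [decodeQ, encode]

lemma toQMat_encode (P : SState n → SState n → ℝ) (σ σ' : SState n) :
    toQMat n P (encode n σ') (encode n σ) = P σ σ' := by
  simp [toQMat, decodeQ_encode]

lemma hzGate_mul_apply_false (C : Matrix (QIdx n) (QIdx n) ℂ) (x : Fin n → Bool) (f : Bool)
    (q : QIdx n) :
    (hzGate n * C) (x, false, f) q =
      (Real.sqrt 2 : ℂ)⁻¹ * (C (x, false, f) q - C (x, true, f) q) := by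
  simp only [Matrix.mul_apply, Fintype.sum_prod_type, hzGate, Matrix.of_apply]
  cases f <;> simp [ite_and, mul_sub, neg_add_eq_sub]

lemma compressA_kronecker_one_mul {α : ℕ} (A : Matrix (QIdx n) (QIdx n) ℂ)
    (U : Matrix (QIdx n × (Fin α → Bool)) (QIdx n × (Fin α → Bool)) ℂ) :
    compressA n α ((A ⊗ₖ (1 : Matrix (Fin α → Bool) (Fin α → Bool) ℂ)) * U) =
      A * compressA n α U := by
  ext p q
  simp [compressA, Matrix.mul_apply, Fintype.sum_prod_type (α₂ := Fin α → Bool), Matrix.one_apply]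

lemma PiK_mul_hzGate_mul_eq_of_PiPM_mul_eq {A B : Matrix (QIdx n) (QIdx n) ℂ}
    (h : PiPM n X k * A * PiPM n X k = PiPM n X k * B * PiPM n X k) :
    PiK n X k * (hzGate n * A) * PiK n X k = PiK n X k * (hzGate n * B) * PiK n X k := by
  have insert_PiPM (C : Matrix (QIdx n) (QIdx n) ℂ) :
      PiK n X k * (hzGate n * C) * PiK n X k =
        PiK n X k * hzGate n * (PiPM n X k * C * PiPM n X k) * PiK n X k :=
    calc PiK n X k * (hzGate n * C) * PiK n X k
        = PiK n X k * PiPM n X k * (hzGate n * C) * (PiPM n X k * PiK n X k) := by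
          rw [PiK_mul_PiPM, PiPM_mul_PiK]
      _ = PiK n X k * (PiPM n X k * hzGate n) * C * PiPM n X k * PiK n X k := by
          simp only [Matrix.mul_assoc]
      _ = PiK n X k * hzGate n * (PiPM n X k * C * PiPM n X k) * PiK n X k := by
          rw [← hzGate_mul_PiPM]
          simp only [Matrix.mul_assoc]
  rw [insert_PiPM A, insert_PiPM B, h]

lemma hzGate_mul_toQMat_Pup_apply (w : Fin n → ℝ) {s t : Finset (Fin n)}
    (hs : s ∈ simplices n X k) (ht : t ∈ simplices n X k) :
    (hzGate n * toQMat n (Pup n X w k)) (encode n (some (s, false))) (encode n (some (t, false))) =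
      ((Real.sqrt 2 : ℂ) * (Kup n X w k : ℂ))⁻¹ * upLap n X w k s t :=
  calc _ = (Real.sqrt 2 : ℂ)⁻¹ *
        (toQMat n (Pup n X w k) (encode n (some (s, false))) (encode n (some (t, false))) -
          toQMat n (Pup n X w k) (encode n (some (s, true))) (encode n (some (t, false)))) :=
        hzGate_mul_apply_false ..
    _ = (Real.sqrt 2 : ℂ)⁻¹ * ((upLap n X w k s t / Kup n X w k : ℝ) : ℂ) := by
        rw [toQMat_encode, toQMat_encode, ← Complex.ofReal_sub, upLap_comm,
          ← Pup_sub_Pup_not_eq_upLap_div ht hs false, Bool.not_false]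
    _ = ((Real.sqrt 2 : ℂ) * (Kup n X w k : ℂ))⁻¹ * upLap n X w k s t := by
        rw [Complex.ofReal_div, mul_inv]
        ring

end Encoding

theorem up_walk_encodes_up_laplacian_general (n k α : ℕ) (X : Finset (Finset (Fin n)))
    (hX : IsComplex n X) (w : Fin n → ℝ)
    (U : Matrix (QIdx n × (Fin α → Bool)) (QIdx n × (Fin α → Bool)) ℂ)
    (henc : PiPM n X k * compressA n α U * PiPM n X k =
      PiPM n X k * toQMat n (Pup n X w k) * PiPM n X k) :
    PiK n X k *
        compressA n α ((hzGate n ⊗ₖ (1 : Matrix (Fin α → Bool) (Fin α → Bool) ℂ)) * U) *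
        PiK n X k =
      ((Real.sqrt 2 : ℂ) * (Kup n X w k : ℂ))⁻¹ • lapQ n (upLap n X w k) := by
  rw [compressA_kronecker_one_mul, PiK_mul_hzGate_mul_eq_of_PiPM_mul_eq henc]
  exact PiK_mul_mul_PiK_eq_smul_lapQ (fun _ _ => mem_simplices_of_upLap_ne_zero hX)
    fun _ hs _ ht => hzGate_mul_toQMat_Pup_apply w hs ht

/-- If `U` is a unitary encoding of `Π_k^± P^{up} Π_k^±` with an
`α`-qubit ancilla, then `V = ((I^{⊗n} ⊗ HZ ⊗ I) ⊗ I^{⊗α}) U` is a unitary encoding of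
`Δ_k^{up}/(√2 · K^{up})`. -/
theorem up_walk_encodes_up_laplacian (n k α : ℕ) (X : Finset (Finset (Fin n)))
    (hX : IsComplex n X) (w : Fin n → ℝ) (hw : ∀ v, 0 < w v)
    (hne : (simplices n X k).Nonempty)
    (U : Matrix (QIdx n × (Fin α → Bool)) (QIdx n × (Fin α → Bool)) ℂ)
    (hU : U ∈ Matrix.unitaryGroup (QIdx n × (Fin α → Bool)) ℂ)
    (henc : PiPM n X k * compressA n α U * PiPM n X k =
      PiPM n X k * toQMat n (Pup n X w k) * PiPM n X k) :
    PiK n X k *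
        compressA n α ((hzGate n ⊗ₖ (1 : Matrix (Fin α → Bool) (Fin α → Bool) ℂ)) * U) *
        PiK n X k =
      ((Real.sqrt 2 : ℂ) * (Kup n X w k : ℂ))⁻¹ • lapQ n (upLap n X w k) :=
  up_walk_encodes_up_laplacian_general n k α X hX w U henc

end QWSC
end
end

section
/- Let σ and σ' be oriented k-simplices with σ ∼↓ σ', and let v_σ and v_{σ'} be the vertices removed from σ and σ' respectively to obtain their common (k−1)-dimensional face. Then s(σ') ≡ s(σ) + Σ_{i ∈ (v_σ, v_{σ'})} (x_σ)_i (mod 2), where (v_σ, v_{σ'}) denotes the set of integers strictly between v_σ and v_{σ'} (in either order) and (x_σ)_i is the i-th bit of x_σ. -/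
open BigOperators Matrix Kronecker

attribute [local instance] Classical.propDecidable

noncomputable section

namespace QWSC

/-!
Each simplex is the common face `τ` together with its removed vertex, and the orientation it induces
on `τ` is flipped according to the parity of the number of vertices of `τ` below that vertex.
Comparing the two, `s(σ) + s(σ')` is the parity of `#{u ∈ τ | u < v} + #{u ∈ τ | u < v'}`. The
vertices of `τ` below both `v` and `v'` are counted twice, so only those strictly between remain,
and there `τ` and `σ` have the same vertices.
-/

theorem decide_mod_two_eq_one_eq_bodd (m : ℕ) : decide (m % 2 = 1) = m.bodd := by
  cases h : m.bodd <;> simp [Nat.mod_two_of_bodd, h]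

section LinearOrder

-- Without the explicit decidability binders, the local instance `Classical.propDecidable` would be
-- chosen here, and it does not unify with the instances found over `Fin n`.
variable {α : Type*} [LinearOrder α] [DecidableLT α] {s : Finset α} {a b : α}

theorem card_filter_lt_add_card_filter_between (hab : a < b) (ha : a ∉ s) :
    (s.filter fun i => i < a).card + (s.filter fun i => a < i ∧ i < b).card =
      (s.filter fun i => i < b).card := by
  have disjoint_pieces : Disjoint (s.filter fun i => i < a) (s.filter fun i => a < i ∧ i < b) :=
    Finset.disjoint_filter.2 fun _ _ hlt hbetween => hlt.asymm hbetween.1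
  rw [← Finset.card_union_of_disjoint disjoint_pieces, ← Finset.filter_or]
  refine congrArg Finset.card (Finset.filter_congr fun i hi => ?_)
  have hia : i ≠ a := ne_of_mem_of_not_mem hi ha
  grind

theorem bodd_card_filter_between (ha : a ∉ s) (hb : b ∉ s) :
    (s.filter fun i => min a b < i ∧ i < max a b).card.bodd =
      xor (s.filter fun i => i < a).card.bodd (s.filter fun i => i < b).card.bodd := by
  wlog hab : a ≤ b generalizing a b
  · rw [min_comm, max_comm, Bool.xor_comm]
    exact this hb ha (le_of_not_ge hab)
  rw [min_eq_left hab, max_eq_right hab]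
  rcases hab.eq_or_lt with rfl | hlt
  · simp [Finset.filter_false_of_mem fun i _ (h : a < i ∧ i < a) => h.1.asymm h.2]
  · simp [← card_filter_lt_add_card_filter_between hlt ha]

theorem filter_insert_between_left [DecidableEq α] :
    ((insert a s).filter fun i => min a b < i ∧ i < max a b) =
      s.filter fun i => min a b < i ∧ i < max a b := by
  refine (Finset.filter_insert ..).trans (if_neg fun hbetween => ?_)
  grind

end LinearOrder

theorem insert_inter_eq_left_of_card {α : Type*} [DecidableEq α] {s t : Finset α} {a : α}
    (hcard : (s ∩ t).card + 1 = s.card) (ha : a ∈ s \ t) : insert a (s ∩ t) = s := by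
  obtain ⟨has, hat⟩ := Finset.mem_sdiff.1 ha
  refine Finset.eq_of_subset_of_card_le
    (Finset.insert_subset has Finset.inter_subset_left) ?_
  rw [Finset.card_insert_of_notMem (by simp [hat]), hcard]

section Orientation

variable {n : ℕ}

theorem faceFlip_insert_self (τ : Finset (Fin n)) (v : Fin n) :
    faceFlip n (insert v τ) v = (τ.filter fun u => u < v).card.bodd := by
  simp [faceFlip, decide_mod_two_eq_one_eq_bodd, Finset.filter_insert]

theorem xor_faceFlip_insert {τ : Finset (Fin n)} {v v' : Fin n} (hv : v ∉ τ) (hv' : v' ∉ τ) :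
    xor (faceFlip n (insert v τ) v) (faceFlip n (insert v' τ) v') =
      decide (((insert v τ).filter fun i => min v v' < i ∧ i < max v v').card % 2 = 1) := by
  rw [decide_mod_two_eq_one_eq_bodd, filter_insert_between_left,
    bodd_card_filter_between hv hv', faceFlip_insert_self, faceFlip_insert_self]

theorem DownAdj.symm {σ σ' : OSimp n} (h : DownAdj n σ σ') : DownAdj n σ' σ := by
  obtain ⟨hne, hinter, hcard, hinduced⟩ := h
  refine ⟨hne.symm, ?_, hcard.symm, fun v hv v' hv' => (hinduced v' hv' v hv).symm⟩
  rw [Finset.inter_comm, hinter, hcard]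

theorem DownAdj.insert_inter_eq_left {σ σ' : OSimp n} (h : DownAdj n σ σ') {v : Fin n}
    (hv : v ∈ σ.1 \ σ'.1) : insert v (σ.1 ∩ σ'.1) = σ.1 :=
  insert_inter_eq_left_of_card h.2.1 hv

theorem DownAdj.insert_inter_eq_right {σ σ' : OSimp n} (h : DownAdj n σ σ') {v' : Fin n}
    (hv' : v' ∈ σ'.1 \ σ.1) : insert v' (σ.1 ∩ σ'.1) = σ'.1 := by
  rw [Finset.inter_comm, h.symm.insert_inter_eq_left hv']

theorem DownAdj.snd_eq_xor_faceFlip {σ σ' : OSimp n} (h : DownAdj n σ σ') {v v' : Fin n}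
    (hv : v ∈ σ.1 \ σ'.1) (hv' : v' ∈ σ'.1 \ σ.1) :
    σ'.2 = xor σ.2 (xor (faceFlip n σ.1 v) (faceFlip n σ'.1 v')) := by
  rw [← Bool.xor_assoc, h.2.2.2 v hv v' hv', Bool.xor_assoc, Bool.xor_self, Bool.xor_false]

end Orientation

/-- If `σ ∼↓ σ'` and `v_σ`, `v_{σ'}` are the vertices removed from `σ`
and `σ'` to obtain the common face, then
`s(σ') ≡ s(σ) + Σ_{i ∈ (v_σ, v_{σ'})} (x_σ)_i (mod 2)`, where the sum ranges over the
vertices of `σ` strictly between `v_σ` and `v_{σ'}`. -/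
theorem downAdj_orientation_parity (n k : ℕ) (σ σ' : OSimp n)
    (hσc : σ.1.card = k + 1) (hσ'c : σ'.1.card = k + 1)
    (h : DownAdj n σ σ') :
    ∀ v ∈ σ.1 \ σ'.1, ∀ v' ∈ σ'.1 \ σ.1,
      σ'.2 = xor σ.2
        (decide ((σ.1.filter fun i => min v v' < i ∧ i < max v v').card % 2 = 1)) := by
  intro v hv v' hv'
  have hv_face : v ∉ σ.1 ∩ σ'.1 := fun hmem =>
    (Finset.mem_sdiff.1 hv).2 (Finset.mem_of_mem_inter_right hmem)
  have hv'_face : v' ∉ σ.1 ∩ σ'.1 := fun hmem =>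
    (Finset.mem_sdiff.1 hv').2 (Finset.mem_of_mem_inter_left hmem)
  have flips_eq := xor_faceFlip_insert hv_face hv'_face
  rw [h.insert_inter_eq_left hv, h.insert_inter_eq_right hv'] at flips_eq
  rw [h.snd_eq_xor_faceFlip hv hv', flips_eq]

end QWSC
end
end
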